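/- Let a = {aⱼ} be a summable, non-increasing sequence of positive real numbers with associated Cantor set C_a. Then the packing dimension and the pre-packing dimension of C_a coincide: sup{s>0 : P^{h_s}(C_a)=∞} = sup{s>0 : P₀^{h_s}(C_a)=∞}, where h_s(x)=x^s. In particular, the packing dimension of C_a equals its upper box dimension. -/

import Mathlib

open Set Filter Metric MeasureTheory
open scoped ENNReal NNReal Topology

noncomputable section

/-- The `h`-Hausdorff measure of `E ⊆ ℝ`:
`H^h(E) = lim_{δ→0⁺} inf {Σᵢ h(|Eᵢ|) : E ⊆ ⋃ᵢ Eᵢ, |Eᵢ| ≤ δ}`.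
Since the inner infimum is antitone in `δ`, the limit as `δ → 0⁺` is the
supremum over `0 < δ ≤ A` (the parameter `A` records the domain `(0,A]` of the
dimension function `h`; by monotonicity the value of the limit is unchanged). -/
def Hh (A : ℝ) (h : ℝ → ℝ≥0∞) (E : Set ℝ) : ℝ≥0∞ :=
  ⨆ (δ : ℝ) (_ : 0 < δ) (_ : δ ≤ A),
    ⨅ (t : ℕ → Set ℝ) (_ : E ⊆ ⋃ n, t n) (_ : ∀ n, Metric.diam (t n) ≤ δ),
      ∑' n, h (Metric.diam (t n))

/-- A `δ`-packing of `E`: a countable disjoint family of open balls centered at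
points of `E` with diameters less than `δ`, recorded as a set of
(center, radius) pairs. -/
def IsPacking (E : Set ℝ) (δ : ℝ) (P : Set (ℝ × ℝ)) : Prop :=
  P.Countable ∧ (∀ p ∈ P, p.1 ∈ E ∧ 0 < p.2 ∧ 2 * p.2 < δ) ∧
    P.PairwiseDisjoint fun p => Metric.ball p.1 p.2

/-- The `h`-packing pre-measure of `E ⊆ ℝ`:
`P₀^h(E) = lim_{δ→0⁺} sup {Σᵢ h(|Bᵢ|) : {Bᵢ} is a δ-packing of E}`.
The inner supremum is monotone in `δ`, so the limit as `δ → 0⁺` is the infimum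
over `0 < δ ≤ A`. -/
def P0h (A : ℝ) (h : ℝ → ℝ≥0∞) (E : Set ℝ) : ℝ≥0∞ :=
  ⨅ (δ : ℝ) (_ : 0 < δ) (_ : δ ≤ A),
    ⨆ (P : Set (ℝ × ℝ)) (_ : IsPacking E δ P), ∑' p : P, h (2 * (p : ℝ × ℝ).2)

/-- The `h`-packing measure: `P^h(E) = inf {Σᵢ P₀^h(Eᵢ) : E = ⋃ᵢ Eᵢ}`. -/
def Ph (A : ℝ) (h : ℝ → ℝ≥0∞) (E : Set ℝ) : ℝ≥0∞ :=
  ⨅ (t : ℕ → Set ℝ) (_ : E = ⋃ n, t n), ∑' n, P0h A h (t n)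

/-- `h` is a dimension function with domain `(0, A]`: continuous, increasing,
doubling, positive, with `h(x) → 0` as `x → 0⁺`.  We record partial functions
`(0,A] → (0,∞]` as functions `ℝ → ℝ≥0∞` extended by `0` on nonpositive
arguments (the continuous extension at `0`). -/
structure IsDimFun (A : ℝ) (h : ℝ → ℝ≥0∞) : Prop where
  posA : 0 < A
  zero_of_nonpos : ∀ x : ℝ, x ≤ 0 → h x = 0
  pos : ∀ x ∈ Set.Ioc (0 : ℝ) A, 0 < h x
  continuousOn : ContinuousOn h (Set.Ioc 0 A)
  strictMonoOn : StrictMonoOn h (Set.Ioc 0 A)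
  doubling : ∃ τ : ℝ≥0∞, 0 < τ ∧ τ ≠ ∞ ∧ ∀ x : ℝ, 0 < x → 2 * x ≤ A → τ * h (2 * x) ≤ h x
  tendsto_zero : Tendsto h (nhdsWithin 0 (Set.Ioi 0)) (nhds 0)

/-- `f ≼ h` on `(0, A]`: there is a (finite, positive) constant `c` with
`f(x) ≤ c·h(x)` for all `x ∈ (0,A]`. -/
def FLeq (A : ℝ) (f h : ℝ → ℝ≥0∞) : Prop :=
  ∃ c : ℝ≥0∞, 0 < c ∧ c ≠ ∞ ∧ ∀ x ∈ Set.Ioc (0 : ℝ) A, f x ≤ c * h x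

/-- `f ≡ h` on `(0, A]`: `f ≼ h` and `h ≼ f`. -/
def FEquiv (A : ℝ) (f h : ℝ → ℝ≥0∞) : Prop := FLeq A f h ∧ FLeq A h f

/-- Tail of a series: `rTail a n = Σ_{j ≥ n} a j` (0-based indexing, so the
paper's `r_n`, `n ≥ 1`, is `rTail a (n-1)`). -/
def rTail (a : ℕ → ℝ) (n : ℕ) : ℝ := ∑' k : ℕ, a (n + k)

/-- In the Cantor construction for the gap sequence `a`, the gaps are indexed
by the nodes `m ≥ 1` of the infinite binary tree in heap order (node `m` has
children `2m, 2m+1`), the gap at node `m` having length `a (m-1)`.  `nodeLen a m`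
is the sum of the lengths of all gaps in the subtree rooted at `m`, i.e. the
length of the step interval corresponding to node `m`. -/
def nodeLen (a : ℕ → ℝ) (m : ℕ) : ℝ :=
  ∑' k : ℕ, ∑ i ∈ Finset.range (2 ^ k), a (m * 2 ^ k + i - 1)

/-- Left endpoint of the `j`-th (0 ≤ j < 2^k, left to right) step-`k` interval
in the Cantor construction for the gap sequence `a` (realized in `[0, Σ a]`):
a left child keeps its parent's left endpoint; a right child's interval starts
after its left sibling's interval followed by the parent's gap. -/
def leftEnd (a : ℕ → ℝ) : ℕ → ℕ → ℝ
  | 0, _ => 0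
  | (k + 1), j =>
    if j % 2 = 0 then leftEnd a k (j / 2)
    else leftEnd a k (j / 2) + nodeLen a (2 ^ (k + 1) + j - 1) + a (2 ^ k + j / 2 - 1)

/-- The Cantor set `C_a` associated with a (positive, non-increasing, summable)
sequence `a`, realized inside the interval `[0, Σ a]`: the intersection over
`k` of the unions of the `2^k` step-`k` intervals. -/
def cantorSetOf (a : ℕ → ℝ) : Set ℝ :=
  ⋂ k : ℕ, ⋃ j ∈ Finset.range (2 ^ k),
    Set.Icc (leftEnd a k j) (leftEnd a k j + nodeLen a (2 ^ k + j))

/-- `h` (increasing and continuous on `(0, A]`) is associated to the sequence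
`a`: the sequence `{h(r_n/n)}` is equivalent to `{1/n}`, i.e. there are
constants `0 < c₁, c₂ < ∞` with `c₁ ≤ n · h(r_n/n) ≤ c₂` for all `n ≥ 1`
(0-based: `n ≥ 1` corresponds to `n+1` below). -/
def IsAssociated (A : ℝ) (h : ℝ → ℝ≥0∞) (a : ℕ → ℝ) : Prop :=
  ContinuousOn h (Set.Ioc 0 A) ∧ StrictMonoOn h (Set.Ioc 0 A) ∧
  ∃ c₁ c₂ : ℝ≥0∞, 0 < c₁ ∧ c₂ ≠ ∞ ∧ ∀ n : ℕ,
    c₁ ≤ ((n : ℝ≥0∞) + 1) * h (rTail a n / ((n : ℝ) + 1)) ∧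
    ((n : ℝ≥0∞) + 1) * h (rTail a n / ((n : ℝ) + 1)) ≤ c₂

/-- Weak tail-equivalence: there are positive integers `j, k` with
`r_n^{(a)} ≥ r_{jn}^{(b)}/j` and `r_n^{(b)} ≥ r_{kn}^{(a)}/k` for all `n ≥ 1`
(0-based shift: paper's `r_n` is `rTail · (n-1)`). -/
def WeakTailEquiv (a b : ℕ → ℝ) : Prop :=
  ∃ j k : ℕ, 0 < j ∧ 0 < k ∧
    (∀ n : ℕ, rTail b (j * (n + 1) - 1) / (j : ℝ) ≤ rTail a n) ∧
    (∀ n : ℕ, rTail a (k * (n + 1) - 1) / (k : ℝ) ≤ rTail b n)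

/-- Tail-equivalence: the sequences of tails are equivalent, i.e. the ratios
`r_n^{(a)}/r_n^{(b)}` are bounded above and below by positive constants. -/
def TailEquiv (a b : ℕ → ℝ) : Prop :=
  ∃ c₁ c₂ : ℝ, 0 < c₁ ∧ ∀ n : ℕ,
    c₁ ≤ rTail a n / rTail b n ∧ rTail a n / rTail b n ≤ c₂

/-- The Hausdorff dimension of `E`, computed from the `h_s`-Hausdorff measures,
`h_s(x) = x^s`:  `dim_H E = sup {s > 0 : H^{h_s}(E) = ∞}`. -/
def hausdDim (A : ℝ) (E : Set ℝ) : ℝ≥0∞ :=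
  ⨆ (s : ℝ) (_ : 0 < s) (_ : Hh A (fun x => ENNReal.ofReal (x ^ s)) E = ∞),
    ENNReal.ofReal s

/-- The packing dimension of `E`: `dim_P E = sup {s > 0 : P^{h_s}(E) = ∞}`. -/
def packDim (A : ℝ) (E : Set ℝ) : ℝ≥0∞ :=
  ⨆ (s : ℝ) (_ : 0 < s) (_ : Ph A (fun x => ENNReal.ofReal (x ^ s)) E = ∞),
    ENNReal.ofReal s

/-- The pre-packing dimension of `E`: `dim_{P₀} E = sup {s > 0 : P₀^{h_s}(E) = ∞}`. -/
def prePackDim (A : ℝ) (E : Set ℝ) : ℝ≥0∞ :=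
  ⨆ (s : ℝ) (_ : 0 < s) (_ : P0h A (fun x => ENNReal.ofReal (x ^ s)) E = ∞),
    ENNReal.ofReal s

/-- `f ≼ h` on the set `S`, for real-valued functions. -/
def RLeqOn (S : Set ℝ) (f h : ℝ → ℝ) : Prop :=
  ∃ c : ℝ, 0 < c ∧ ∀ x ∈ S, f x ≤ c * h x

/-- `f ≡ h` on the set `S`, for real-valued functions. -/
def REquivOn (S : Set ℝ) (f h : ℝ → ℝ) : Prop := RLeqOn S f h ∧ RLeqOn S h f

/-- Real-valued version of `IsAssociated`: `h : (0,A] → (0,∞)` is increasing,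
continuous, positive and `{h(r_n/n)} ≡ {1/n}`. -/
def IsAssociatedR (A : ℝ) (h : ℝ → ℝ) (a : ℕ → ℝ) : Prop :=
  ContinuousOn h (Set.Ioc 0 A) ∧ StrictMonoOn h (Set.Ioc 0 A) ∧
  (∀ x ∈ Set.Ioc (0 : ℝ) A, 0 < h x) ∧
  ∃ c₁ c₂ : ℝ, 0 < c₁ ∧ ∀ n : ℕ,
    c₁ ≤ ((n : ℝ) + 1) * h (rTail a n / ((n : ℝ) + 1)) ∧
    ((n : ℝ) + 1) * h (rTail a n / ((n : ℝ) + 1)) ≤ c₂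

end

/-!
By Baire's theorem, if `P^h(C_a)` is finite then some piece of a decomposition with finite
pre-measure is dense in a relatively open part of the closed set `C_a`; since `h` is doubling,
passing to closures keeps the pre-measure finite, so `C_a` has finite pre-measure near one of its
points. There the left endpoints of the step intervals form a packing, which bounds
`2^N h(ℓ_N)`, where `ℓ_N` is the length of the longest step-`N` interval. This bound no longer
refers to the chosen point: because `a` is non-increasing, every step-`N` interval has length
between `ℓ_(N+1)` and `ℓ_N`. It gives back `P₀^h(C_a) < ∞`, since every small ball centred in `C_a`
contains a step interval of comparable size and disjoint step intervals of generations `L_i` satisfy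
Kraft's inequality `∑ 2^(-L_i) ≤ 1`.
-/

section PackingMeasure

variable {A δ : ℝ} {C : ℝ≥0} {h : ℝ → ℝ≥0∞} {E F : Set ℝ}

/-- The supremum of `∑ᵢ h(|Bᵢ|)` over the `δ`-packings `{Bᵢ}` of `E`, whose limit as `δ → 0⁺`
is the packing pre-measure `P0h`. -/
noncomputable def packSup (h : ℝ → ℝ≥0∞) (δ : ℝ) (E : Set ℝ) : ℝ≥0∞ :=
  ⨆ (P : Set (ℝ × ℝ)) (_ : IsPacking E δ P), ∑' p : P, h (2 * (p : ℝ × ℝ).2)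

/-- The doubling condition for a dimension function `h` with domain `(0, A]`, in the form
`h(2x) ≤ C h(x)`. -/
def IsDoublingOn (A : ℝ) (C : ℝ≥0) (h : ℝ → ℝ≥0∞) : Prop :=
  ∀ x, 0 < x → 2 * x ≤ A → h (2 * x) ≤ C * h x

lemma P0h_ne_top_iff : P0h A h E ≠ ∞ ↔ ∃ δ, 0 < δ ∧ δ ≤ A ∧ packSup h δ E ≠ ∞ := by
  simp only [P0h, packSup, ← lt_top_iff_ne_top, iInf_lt_iff, exists_prop]

lemma packSup_mono (hEF : E ⊆ F) : packSup h δ E ≤ packSup h δ F :=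
  iSup₂_le fun P ⟨hcount, hball, hdisj⟩ =>
    le_iSup₂_of_le P ⟨hcount, fun p hp => (hball p hp).imp_left (@hEF _), hdisj⟩ le_rfl

lemma P0h_mono (hEF : E ⊆ F) : P0h A h E ≤ P0h A h F :=
  iInf_mono fun _ => iInf₂_mono fun _ _ => packSup_mono hEF

lemma tsum_le_packSup {ι : Type*} [Countable ι] {c r : ι → ℝ} (hc : ∀ i, c i ∈ E)
    (hr : ∀ i, 0 < r i) (hrδ : ∀ i, 2 * r i < δ)
    (hdisj : Pairwise (Function.onFun Disjoint fun i => ball (c i) (r i))) :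
    ∑' i, h (2 * r i) ≤ packSup h δ E := by
  have hinj : Function.Injective fun i => (c i, r i) := by
    intro i j hij
    by_contra hne
    have hmem : c i ∈ ball (c j) (r j) := (Prod.mk.inj hij).1 ▸ mem_ball_self (hr j)
    exact Set.disjoint_left.1 (hdisj hne) (mem_ball_self (hr i)) hmem
  have hpack : IsPacking E δ (range fun i => (c i, r i)) := by
    refine ⟨countable_range _, ?_, ?_⟩
    · rintro _ ⟨i, rfl⟩
      exact ⟨hc i, hr i, hrδ i⟩
    · rintro _ ⟨i, rfl⟩ _ ⟨j, rfl⟩ hij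
      exact hdisj (ne_of_apply_ne (fun k => (c k, r k)) hij)
  exact le_iSup₂_of_le _ hpack (tsum_range (fun p : ℝ × ℝ => h (2 * p.2)) hinj).ge

lemma packSup_closure_le (hh : IsDoublingOn A C h) (hδA : δ ≤ A) :
    packSup h δ (closure E) ≤ C * packSup h δ E := by
  refine iSup₂_le fun P ⟨hcount, hball, hdisj⟩ => ?_
  have := hcount.to_subtype
  have hnear : ∀ p : P, ∃ z ∈ E, dist (p : ℝ × ℝ).1 z < (p : ℝ × ℝ).2 / 2 := fun p =>
    Metric.mem_closure_iff.1 (hball p p.2).1 _ (half_pos (hball p p.2).2.1)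
  choose z hzE hz using hnear
  have hsub : ∀ p : P, ball (z p) ((p : ℝ × ℝ).2 / 2) ⊆ ball (p : ℝ × ℝ).1 (p : ℝ × ℝ).2 :=
    fun p => ball_subset_ball' (by rw [dist_comm]; linarith [hz p])
  calc ∑' p : P, h (2 * (p : ℝ × ℝ).2)
      ≤ ∑' p : P, C * h (2 * ((p : ℝ × ℝ).2 / 2)) := by
        refine ENNReal.tsum_le_tsum fun p => ?_
        obtain ⟨-, hr, hrδ⟩ := hball p p.2
        rw [mul_div_cancel₀ _ two_ne_zero]
        exact hh _ hr (by linarith)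
    _ = C * ∑' p : P, h (2 * ((p : ℝ × ℝ).2 / 2)) := ENNReal.tsum_mul_left
    _ ≤ C * packSup h δ E := by
        gcongr
        refine tsum_le_packSup hzE (fun p => half_pos (hball p p.2).2.1)
          (fun p => by linarith [hball p p.2]) fun p q hpq => ?_
        exact (hdisj p.2 q.2 (Subtype.coe_ne_coe.2 hpq)).mono (hsub p) (hsub q)

lemma P0h_closure_ne_top (hh : IsDoublingOn A C h) (hE : P0h A h E ≠ ∞) :
    P0h A h (closure E) ≠ ∞ := by
  obtain ⟨δ, hδ, hδA, hfin⟩ := P0h_ne_top_iff.1 hE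
  exact P0h_ne_top_iff.2
    ⟨δ, hδ, hδA, ne_top_of_le_ne_top (by finiteness) (packSup_closure_le hh hδA)⟩

lemma P0h_empty (hA : 0 < A) : P0h A h ∅ = 0 := by
  refine le_antisymm (iInf₂_le_of_le A hA (iInf_le_of_le le_rfl (iSup₂_le fun P hP => ?_))) zero_le
  have : IsEmpty P := ⟨fun p => (hP.2.1 p p.2).1⟩
  simp

lemma Ph_le_P0h (hA : 0 < A) : Ph A h E ≤ P0h A h E := by
  have hcover : E = ⋃ n : ℕ, if n = 0 then E else ∅ :=
    (subset_iUnion_of_subset 0 (by simp)).antisymm (iUnion_subset fun n => by split_ifs <;> simp)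
  refine iInf₂_le_of_le _ hcover (tsum_eq_single 0 fun n hn => ?_).le
  simp [hn, P0h_empty hA]

lemma exists_P0h_inter_ball_ne_top (hh : IsDoublingOn A C h) (hE : IsClosed E)
    (hne : E.Nonempty) (hfin : Ph A h E ≠ ∞) :
    ∃ x ∈ E, ∃ ε > 0, P0h A h (E ∩ ball x ε) ≠ ∞ := by
  simp only [Ph, ← lt_top_iff_ne_top, iInf_lt_iff] at hfin
  obtain ⟨t, ht, htsum⟩ := hfin
  have := hE.completeSpace_coe
  have := hne.to_subtype
  have hcover : ⋃ n, ((↑) ⁻¹' closure (t n) : Set E) = univ := by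
    refine eq_univ_of_forall fun y => ?_
    obtain ⟨n, hn⟩ := mem_iUnion.1 (ht.subset y.2)
    exact mem_iUnion.2 ⟨n, subset_closure hn⟩
  obtain ⟨n, x, hx⟩ := nonempty_interior_of_iUnion_of_closed
    (fun n => isClosed_closure.preimage continuous_subtype_val) hcover
  obtain ⟨ε, hε, hball⟩ := Metric.mem_nhds_iff.1 (mem_interior_iff_mem_nhds.1 hx)
  have hsub : E ∩ ball x ε ⊆ closure (t n) := fun y ⟨hyE, hy⟩ =>
    hball (show (⟨y, hyE⟩ : E) ∈ ball x ε from hy)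
  have htn : P0h A h (t n) ≠ ∞ := ENNReal.ne_top_of_tsum_ne_top htsum.ne n
  exact ⟨x, x.2, ε, hε, ne_top_of_le_ne_top (P0h_closure_ne_top hh htn) (P0h_mono hsub)⟩

end PackingMeasure

section StepIntervals

variable {a : ℕ → ℝ}

lemma nonneg_of_antitone_of_summable (ha : Antitone a) (hs : Summable a) (n : ℕ) : 0 ≤ a n :=
  ha.le_of_tendsto hs.tendsto_atTop_zero n

lemma summable_sum_descendants (ha : Antitone a) (hs : Summable a) {m : ℕ} (hm : 1 ≤ m) :
    Summable fun k : ℕ => ∑ i ∈ Finset.range (2 ^ k), a (m * 2 ^ k + i - 1) := by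
  have h0 := nonneg_of_antitone_of_summable ha hs
  have hshift : Summable fun n => a (n - 1) := (summable_nat_add_iff 1).1 hs
  have hcond : Summable fun k : ℕ => (2 : ℝ) ^ k * a (2 ^ k - 1) :=
    (summable_condensed_iff_of_nonneg (fun n => h0 (n - 1))
      fun _ _ _ hmn => ha (Nat.sub_le_sub_right hmn 1)).2 hshift
  refine hcond.of_nonneg_of_le (fun k => Finset.sum_nonneg fun i _ => h0 _) fun k => ?_
  have hle : ∀ i ∈ Finset.range (2 ^ k), a (m * 2 ^ k + i - 1) ≤ a (2 ^ k - 1) := fun i _ =>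
    ha (Nat.sub_le_sub_right ((Nat.le_mul_of_pos_left _ hm).trans (Nat.le_add_right _ _)) 1)
  simpa using Finset.sum_le_card_nsmul _ _ _ hle

lemma nodeLen_nonneg (h0 : ∀ n, 0 ≤ a n) (m : ℕ) : 0 ≤ nodeLen a m :=
  tsum_nonneg fun _ => Finset.sum_nonneg fun _ _ => h0 _

lemma nodeLen_le_nodeLen (ha : Antitone a) (hs : Summable a) {m n : ℕ} (hm : 1 ≤ m)
    (hmn : m ≤ n) : nodeLen a n ≤ nodeLen a m :=
  (summable_sum_descendants ha hs (hm.trans hmn)).tsum_le_tsum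
    (fun _ => Finset.sum_le_sum fun _ _ => ha (by gcongr)) (summable_sum_descendants ha hs hm)

lemma nodeLen_eq_add_children (ha : Antitone a) (hs : Summable a) {m : ℕ} (hm : 1 ≤ m) :
    nodeLen a m = a (m - 1) + nodeLen a (2 * m) + nodeLen a (2 * m + 1) := by
  have hleft := summable_sum_descendants ha hs (m := 2 * m) (by omega)
  have hright := summable_sum_descendants ha hs (m := 2 * m + 1) (by omega)
  have hsplit : ∀ k : ℕ, ∑ i ∈ Finset.range (2 ^ (k + 1)), a (m * 2 ^ (k + 1) + i - 1)
      = ∑ i ∈ Finset.range (2 ^ k), a (2 * m * 2 ^ k + i - 1)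
        + ∑ i ∈ Finset.range (2 ^ k), a ((2 * m + 1) * 2 ^ k + i - 1) := by
    intro k
    rw [pow_succ, mul_two, Finset.sum_range_add]
    ring_nf
  rw [nodeLen, (summable_sum_descendants ha hs hm).tsum_eq_zero_add, add_assoc, nodeLen, nodeLen,
    ← hleft.tsum_add hright]
  simp [hsplit]

lemma nodeLen_pos (hpos : ∀ n, 0 < a n) (ha : Antitone a) (hs : Summable a) {m : ℕ}
    (hm : 1 ≤ m) : 0 < nodeLen a m := by
  have hnonneg := nodeLen_nonneg fun n => (hpos n).le
  rw [nodeLen_eq_add_children ha hs hm]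
  linarith [hpos (m - 1), hnonneg (2 * m), hnonneg (2 * m + 1)]

lemma two_pow_mul_nodeLen_le (ha : Antitone a) (hs : Summable a) (L : ℕ) {m : ℕ} (hm : 1 ≤ m) :
    2 ^ L * nodeLen a ((m + 1) * 2 ^ L) ≤ nodeLen a m := by
  induction L generalizing m with
  | zero => simpa using nodeLen_le_nodeLen ha hs hm m.le_succ
  | succ L ih =>
    calc 2 ^ (L + 1) * nodeLen a ((m + 1) * 2 ^ (L + 1))
        = 2 * (2 ^ L * nodeLen a ((2 * m + 1 + 1) * 2 ^ L)) := by ring_nf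
      _ ≤ 2 * nodeLen a (2 * m + 1) := by gcongr; exact ih (by omega)
      _ ≤ nodeLen a m := by
        rw [nodeLen_eq_add_children ha hs hm]
        linarith [nonneg_of_antitone_of_summable ha hs (m - 1),
          nodeLen_le_nodeLen ha hs (m := 2 * m) (by omega) (Nat.le_succ _)]

lemma tendsto_nodeLen_two_pow (ha : Antitone a) (hs : Summable a) :
    Tendsto (fun L : ℕ => nodeLen a (2 ^ L)) atTop (𝓝 0) := by
  rw [← tendsto_add_atTop_iff_nat 1]
  have hbound : ∀ L : ℕ, nodeLen a (2 ^ (L + 1)) ≤ nodeLen a 1 * (1 / 2) ^ L := by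
    intro L
    rw [one_div_pow, mul_one_div, le_div_iff₀' (by positivity), pow_succ' 2 L]
    exact two_pow_mul_nodeLen_le ha hs L le_rfl
  refine squeeze_zero (fun L => nodeLen_nonneg (nonneg_of_antitone_of_summable ha hs) _) hbound ?_
  simpa using (tendsto_pow_atTop_nhds_zero_of_lt_one (by norm_num : (0 : ℝ) ≤ 1 / 2)
    (by norm_num)).const_mul (nodeLen a 1)

/-- The `j`-th step-`k` interval, counted from the left, of the construction of `cantorSetOf a`.
Indices `j ≥ 2 ^ k` are allowed but carry no meaning. -/
def stepInterval (a : ℕ → ℝ) (k j : ℕ) : Set ℝ :=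
  Icc (leftEnd a k j) (leftEnd a k j + nodeLen a (2 ^ k + j))

lemma mem_cantorSetOf {x : ℝ} :
    x ∈ cantorSetOf a ↔ ∀ k, ∃ j < 2 ^ k, x ∈ stepInterval a k j := by
  simp only [cantorSetOf, stepInterval, mem_iInter, mem_iUnion, Finset.mem_range, exists_prop]

lemma isClosed_cantorSetOf (a : ℕ → ℝ) : IsClosed (cantorSetOf a) :=
  isClosed_iInter fun _ => (Finset.finite_toSet _).isClosed_biUnion fun _ _ => isClosed_Icc

lemma leftEnd_mem_stepInterval (h0 : ∀ n, 0 ≤ a n) (k j : ℕ) :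
    leftEnd a k j ∈ stepInterval a k j :=
  left_mem_Icc.2 (le_add_of_nonneg_right (nodeLen_nonneg h0 _))

lemma stepInterval_succ_subset (ha : Antitone a) (hs : Summable a) (k j : ℕ) :
    stepInterval a (k + 1) j ⊆ stepInterval a k (j / 2) := by
  have h0 := nonneg_of_antitone_of_summable ha hs
  have hnode := nodeLen_eq_add_children ha hs (m := 2 ^ k + j / 2)
    (Nat.one_le_two_pow.trans (Nat.le_add_right _ _))
  have hgap := h0 (2 ^ k + j / 2 - 1)
  have hleft := nodeLen_nonneg h0 (2 * (2 ^ k + j / 2))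
  have hright := nodeLen_nonneg h0 (2 * (2 ^ k + j / 2) + 1)
  apply Icc_subset_Icc <;> rw [leftEnd]
  all_goals
    split_ifs with hj
    · have hchild : 2 ^ (k + 1) + j = 2 * (2 ^ k + j / 2) := by omega
      grind
    · have hchild : 2 ^ (k + 1) + j = 2 * (2 ^ k + j / 2) + 1 := by omega
      grind

lemma stepInterval_add_subset (ha : Antitone a) (hs : Summable a) (k d j : ℕ) :
    stepInterval a (k + d) j ⊆ stepInterval a k (j / 2 ^ d) := by
  induction d generalizing j with
  | zero => simp
  | succ d ih =>
    rw [pow_succ', ← Nat.div_div_eq_div_mul]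
    exact (stepInterval_succ_subset ha hs (k + d) j).trans (ih (j / 2))

lemma leftEnd_add_mul_two_pow (k j d : ℕ) : leftEnd a (k + d) (j * 2 ^ d) = leftEnd a k j := by
  induction d with
  | zero => simp
  | succ d ih =>
    have hdouble : j * 2 ^ (d + 1) = 2 * (j * 2 ^ d) := by ring
    rw [← add_assoc, leftEnd, hdouble, if_pos (by omega), Nat.mul_div_cancel_left _ two_pos, ih]

lemma leftEnd_mem_cantorSetOf (ha : Antitone a) (hs : Summable a) {k j : ℕ} (hj : j < 2 ^ k) :
    leftEnd a k j ∈ cantorSetOf a := by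
  have h0 := nonneg_of_antitone_of_summable ha hs
  refine mem_cantorSetOf.2 fun n => ?_
  rcases le_total k n with hkn | hnk
  · obtain ⟨d, rfl⟩ := Nat.exists_eq_add_of_le hkn
    refine ⟨j * 2 ^ d, by rw [pow_add]; gcongr, ?_⟩
    rw [← leftEnd_add_mul_two_pow k j d]
    exact leftEnd_mem_stepInterval h0 _ _
  · obtain ⟨d, rfl⟩ := Nat.exists_eq_add_of_le hnk
    refine ⟨j / 2 ^ d, Nat.div_lt_of_lt_mul (by rwa [← pow_add, add_comm d]), ?_⟩
    exact stepInterval_add_subset ha hs n d j (leftEnd_mem_stepInterval h0 _ _)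

lemma leftEnd_add_nodeLen_le_leftEnd_succ (ha : Antitone a) (hs : Summable a) {k j : ℕ}
    (hj : j + 1 < 2 ^ k) : leftEnd a k j + nodeLen a (2 ^ k + j) ≤ leftEnd a k (j + 1) := by
  have h0 := nonneg_of_antitone_of_summable ha hs
  induction k generalizing j with
  | zero => simp at hj
  | succ k ih =>
    rcases Nat.even_or_odd' j with ⟨c, rfl | rfl⟩
    · have hparent : (2 * c + 1) / 2 = c := by omega
      rw [leftEnd, leftEnd, if_pos (by omega), if_neg (by omega), hparent,
        Nat.mul_div_cancel_left _ two_pos, ← add_assoc, Nat.add_sub_cancel]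
      linarith [h0 (2 ^ k + c - 1)]
    · have hparent : (2 * c + 1) / 2 = c := by omega
      have hparent' : (2 * c + 1 + 1) / 2 = c + 1 := by omega
      have hright := (stepInterval_succ_subset ha hs k (2 * c + 1)
        (right_mem_Icc.2 (le_add_of_nonneg_right (nodeLen_nonneg h0 _)))).2
      have hleft := (stepInterval_succ_subset ha hs k (2 * c + 1 + 1)
        (leftEnd_mem_stepInterval h0 _ _)).1
      rw [hparent] at hright
      rw [hparent'] at hleft
      linarith [ih (j := c) (by omega)]

lemma leftEnd_add_nodeLen_le_leftEnd (ha : Antitone a) (hs : Summable a) {k i j : ℕ}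
    (hij : i < j) (hj : j < 2 ^ k) :
    leftEnd a k i + nodeLen a (2 ^ (k + 1)) ≤ leftEnd a k j := by
  induction j, hij using Nat.le_induction with
  | base =>
    have hlen : nodeLen a (2 ^ (k + 1)) ≤ nodeLen a (2 ^ k + i) :=
      nodeLen_le_nodeLen ha hs (Nat.one_le_two_pow.trans (Nat.le_add_right _ _)) (by omega)
    linarith [leftEnd_add_nodeLen_le_leftEnd_succ ha hs hj]
  | succ j _ ih =>
    linarith [ih (by omega), leftEnd_add_nodeLen_le_leftEnd_succ ha hs hj,
      nodeLen_nonneg (nonneg_of_antitone_of_summable ha hs) (2 ^ k + j)]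

lemma stepInterval_subset_ball (ha : Antitone a) (hs : Summable a) {k j : ℕ} {x r : ℝ}
    (hx : x ∈ stepInterval a k j) (hr : nodeLen a (2 ^ k) < r) :
    stepInterval a k j ⊆ ball x r := by
  intro y hy
  calc dist y x ≤ leftEnd a k j + nodeLen a (2 ^ k + j) - leftEnd a k j :=
        Real.dist_le_of_mem_Icc hy hx
    _ = nodeLen a (2 ^ k + j) := add_sub_cancel_left _ _
    _ ≤ nodeLen a (2 ^ k) := nodeLen_le_nodeLen ha hs Nat.one_le_two_pow (Nat.le_add_right _ _)
    _ < r := hr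

lemma exists_stepInterval_subset_ball (ha : Antitone a) (hs : Summable a) {N : ℕ} {x r : ℝ}
    (hx : x ∈ cantorSetOf a) (hr : 0 < r) (hrN : r ≤ nodeLen a (2 ^ N)) :
    ∃ M ≥ N, r ≤ nodeLen a (2 ^ M) ∧
      ∃ j < 2 ^ (M + 1), stepInterval a (M + 1) j ⊆ ball x r := by
  have hsmall : ∃ d, nodeLen a (2 ^ (N + d)) < r := by
    obtain ⟨L, hL⟩ := eventually_atTop.1 ((tendsto_nodeLen_two_pow ha hs).eventually_lt_const hr)
    exact ⟨L, hL _ (Nat.le_add_left _ _)⟩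
  obtain ⟨d, hd, hd'⟩ := Nat.exists_not_and_succ_of_not_zero_of_exists hrN.not_gt hsmall
  obtain ⟨j, hj, hxj⟩ := mem_cantorSetOf.1 hx (N + d + 1)
  exact ⟨N + d, Nat.le_add_right _ _, not_lt.1 hd, j, hj, stepInterval_subset_ball ha hs hxj hd'⟩

end StepIntervals

section Kraft

/-- The half-open dyadic interval `[j / 2^L, (j + 1) / 2^L)`, the model of the step interval
`stepInterval a L j` with the same nesting structure. -/
def dyadicIco (L j : ℕ) : Set ℝ := Ico ((j : ℝ) / 2 ^ L) ((j + 1) / 2 ^ L)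

lemma volume_dyadicIco (L j : ℕ) : volume (dyadicIco L j) = 2⁻¹ ^ L := by
  have hlen : ((j : ℝ) + 1) / 2 ^ L - j / 2 ^ L = (2 ^ L)⁻¹ := by ring
  rw [dyadicIco, Real.volume_Ico, hlen, ENNReal.ofReal_inv_of_pos (by positivity),
    ENNReal.ofReal_pow zero_le_two, ENNReal.ofReal_ofNat, ENNReal.inv_pow]

lemma dyadicIco_subset_Ico {L j : ℕ} (hj : j < 2 ^ L) : dyadicIco L j ⊆ Ico 0 1 := by
  refine Ico_subset_Ico (by positivity) ((div_le_one (by positivity)).2 ?_)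
  exact_mod_cast hj

lemma floor_mul_two_pow_of_mem_dyadicIco {L j : ℕ} {x : ℝ} (hx : x ∈ dyadicIco L j) :
    ⌊x * 2 ^ L⌋₊ = j := by
  rw [Nat.floor_eq_iff]
  · exact ⟨(div_le_iff₀ (by positivity)).1 hx.1, (lt_div_iff₀ (by positivity)).1 hx.2⟩
  · have : 0 ≤ x := le_trans (by positivity) hx.1
    positivity

lemma div_two_pow_eq_of_mem_dyadicIco {L d i j : ℕ} {x : ℝ} (hi : x ∈ dyadicIco L i)
    (hj : x ∈ dyadicIco (L + d) j) : j / 2 ^ d = i := by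
  rw [← floor_mul_two_pow_of_mem_dyadicIco hi, ← floor_mul_two_pow_of_mem_dyadicIco hj,
    ← Nat.floor_div_natCast]
  congr 1
  push_cast
  field_simp
  ring

variable {a : ℕ → ℝ}

lemma disjoint_dyadicIco_of_disjoint_stepInterval (ha : Antitone a) (hs : Summable a)
    {L M i j : ℕ} (hdisj : Disjoint (stepInterval a L i) (stepInterval a M j)) :
    Disjoint (dyadicIco L i) (dyadicIco M j) := by
  wlog hLM : L ≤ M generalizing L M i j
  · exact (this hdisj.symm (le_of_not_ge hLM)).symm
  obtain ⟨d, rfl⟩ := Nat.exists_eq_add_of_le hLM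
  refine Set.disjoint_left.2 fun x hi hj => ?_
  have hsub : stepInterval a (L + d) j ⊆ stepInterval a L i :=
    div_two_pow_eq_of_mem_dyadicIco hi hj ▸ stepInterval_add_subset ha hs L d j
  have hmem := leftEnd_mem_stepInterval (nonneg_of_antitone_of_summable ha hs) (L + d) j
  exact Set.disjoint_left.1 hdisj (hsub hmem) hmem

lemma tsum_two_inv_pow_le_one_of_disjoint_stepInterval (ha : Antitone a) (hs : Summable a)
    {ι : Type*} [Countable ι] {L j : ι → ℕ} (hj : ∀ i, j i < 2 ^ L i)
    (hdisj : Pairwise (Function.onFun Disjoint fun i => stepInterval a (L i) (j i))) :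
    ∑' i, (2⁻¹ : ℝ≥0∞) ^ L i ≤ 1 := by
  calc ∑' i, (2⁻¹ : ℝ≥0∞) ^ L i = ∑' i, volume (dyadicIco (L i) (j i)) := by
        simp only [volume_dyadicIco]
    _ = volume (⋃ i, dyadicIco (L i) (j i)) :=
        (measure_iUnion
          (fun _ _ hne => disjoint_dyadicIco_of_disjoint_stepInterval ha hs (hdisj hne))
          fun _ => measurableSet_Ico).symm
    _ ≤ volume (Ico (0 : ℝ) 1) :=
        measure_mono (iUnion_subset fun i => dyadicIco_subset_Ico (hj i))
    _ = 1 := by simp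

end Kraft

section CantorPacking

variable {A δ : ℝ} {C K : ℝ≥0} {h : ℝ → ℝ≥0∞} {a : ℕ → ℝ}

lemma two_pow_mul_le_packSup (ha : Antitone a) (hs : Summable a) {k j d : ℕ} (hj : j < 2 ^ k)
    (hpos : 0 < nodeLen a (2 ^ (k + d + 1))) (hδ : nodeLen a (2 ^ (k + d + 1)) < δ) :
    2 ^ d * h (nodeLen a (2 ^ (k + d + 1))) ≤ packSup h δ (cantorSetOf a ∩ stepInterval a k j) := by
  set l := nodeLen a (2 ^ (k + d + 1))
  let c : Fin (2 ^ d) → ℝ := fun u => leftEnd a (k + d) (j * 2 ^ d + u)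
  have hindex : ∀ u : Fin (2 ^ d), j * 2 ^ d + u < 2 ^ (k + d) := fun u =>
    calc j * 2 ^ d + u < (j + 1) * 2 ^ d := by rw [add_one_mul]; gcongr; exact u.2
      _ ≤ 2 ^ k * 2 ^ d := by gcongr; exact hj
      _ = 2 ^ (k + d) := (pow_add ..).symm
  have hmem : ∀ u, c u ∈ cantorSetOf a ∩ stepInterval a k j := by
    refine fun u => ⟨leftEnd_mem_cantorSetOf ha hs (hindex u), ?_⟩
    have hparent : (j * 2 ^ d + u) / 2 ^ d = j := by
      rw [mul_comm, Nat.mul_add_div (by positivity), Nat.div_eq_of_lt u.2, add_zero]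
    exact hparent ▸ stepInterval_add_subset ha hs k d _
      (leftEnd_mem_stepInterval (nonneg_of_antitone_of_summable ha hs) _ _)
  have hdisj : Pairwise (Function.onFun Disjoint fun u => ball (c u) (l / 2)) := by
    refine (pairwise_disjoint_on _).2 fun u v huv => ball_disjoint_ball ?_
    have hsep : c u + l ≤ c v :=
      leftEnd_add_nodeLen_le_leftEnd ha hs (Nat.add_lt_add_left huv _) (hindex v)
    rw [add_halves, dist_comm, Real.dist_eq]
    exact (by linarith : l ≤ c v - c u).trans (le_abs_self _)
  have hdiam : 2 * (l / 2) = l := mul_div_cancel₀ l two_ne_zero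
  calc 2 ^ d * h l = ∑' _ : Fin (2 ^ d), h (2 * (l / 2)) := by simp [hdiam, tsum_fintype]
    _ ≤ _ := tsum_le_packSup hmem (fun _ => half_pos hpos) (fun _ => hdiam.trans_lt hδ) hdisj

lemma exists_eventually_two_pow_mul_le (hpos : ∀ n, 0 < a n) (ha : Antitone a) (hs : Summable a)
    {x ε : ℝ} (hx : x ∈ cantorSetOf a) (hε : 0 < ε)
    (hfin : P0h A h (cantorSetOf a ∩ ball x ε) ≠ ∞) :
    ∃ K : ℝ≥0, ∀ᶠ N in atTop, 2 ^ N * h (nodeLen a (2 ^ N)) ≤ K := by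
  have hlim := tendsto_nodeLen_two_pow ha hs
  obtain ⟨δ, hδ, -, hsup⟩ := P0h_ne_top_iff.1 hfin
  obtain ⟨k, hk⟩ := (hlim.eventually_lt_const hε).exists
  obtain ⟨j, hj, hxj⟩ := mem_cantorSetOf.1 hx k
  refine ⟨2 ^ (k + 1) * (packSup h δ (cantorSetOf a ∩ ball x ε)).toNNReal, ?_⟩
  filter_upwards [eventually_ge_atTop (k + 1), hlim.eventually_lt_const hδ] with N hkN hNδ
  obtain ⟨d, rfl⟩ : ∃ d, N = k + d + 1 := ⟨N - (k + 1), by omega⟩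
  calc 2 ^ (k + d + 1) * h (nodeLen a (2 ^ (k + d + 1)))
      = 2 ^ (k + 1) * (2 ^ d * h (nodeLen a (2 ^ (k + d + 1)))) := by
        rw [← mul_assoc, ← pow_add, add_right_comm]
    _ ≤ 2 ^ (k + 1) * packSup h δ (cantorSetOf a ∩ stepInterval a k j) := by
        gcongr
        exact two_pow_mul_le_packSup ha hs hj (nodeLen_pos hpos ha hs Nat.one_le_two_pow) hNδ
    _ ≤ 2 ^ (k + 1) * packSup h δ (cantorSetOf a ∩ ball x ε) := by
        gcongr
        exact packSup_mono (inter_subset_inter_right _ (stepInterval_subset_ball ha hs hxj hk))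
    _ = _ := by push_cast [ENNReal.coe_toNNReal hsup]; rfl

lemma exists_stepInterval_subset_ball_gauge_le (ha : Antitone a) (hs : Summable a)
    (hmono : MonotoneOn h (Ioc 0 A)) (hh : IsDoublingOn A C h) {N : ℕ}
    (hNA : nodeLen a (2 ^ N) ≤ A) (hK : ∀ M ≥ N, 2 ^ M * h (nodeLen a (2 ^ M)) ≤ K)
    {x r : ℝ} (hx : x ∈ cantorSetOf a) (hr : 0 < r) (hrN : 2 * r ≤ nodeLen a (2 ^ N)) :
    ∃ L, ∃ j < 2 ^ L, stepInterval a L j ⊆ ball x r ∧ h (2 * r) ≤ 2 * C * K * 2⁻¹ ^ L := by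
  obtain ⟨M, hNM, hrM, j, hj, hsub⟩ :=
    exists_stepInterval_subset_ball ha hs hx hr (by linarith : r ≤ nodeLen a (2 ^ N))
  refine ⟨M + 1, j, hj, hsub, ?_⟩
  have hMA : nodeLen a (2 ^ M) ≤ A :=
    (nodeLen_le_nodeLen ha hs Nat.one_le_two_pow (by gcongr; norm_num)).trans hNA
  have hscale : (2 : ℝ≥0∞) ^ M * 2⁻¹ ^ M = 1 := by
    rw [← mul_pow, ENNReal.mul_inv_cancel two_ne_zero ENNReal.ofNat_ne_top, one_pow]
  have hstep : (2 : ℝ≥0∞) * 2⁻¹ ^ (M + 1) = 2⁻¹ ^ M := by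
    rw [pow_succ', ← mul_assoc, ENNReal.mul_inv_cancel two_ne_zero ENNReal.ofNat_ne_top, one_mul]
  calc h (2 * r) ≤ C * h r := hh r hr (hrN.trans hNA)
    _ ≤ C * h (nodeLen a (2 ^ M)) := by
        gcongr
        exact hmono ⟨hr, hrM.trans hMA⟩ ⟨hr.trans_le hrM, hMA⟩ hrM
    _ = C * (2 ^ M * h (nodeLen a (2 ^ M))) * 2⁻¹ ^ M := by
        rw [mul_assoc, mul_right_comm (2 ^ M), hscale, one_mul]
    _ ≤ C * K * 2⁻¹ ^ M := by gcongr; exact hK M hNM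
    _ = 2 * C * K * 2⁻¹ ^ (M + 1) := by rw [← hstep]; ring

lemma packSup_cantorSetOf_le (ha : Antitone a) (hs : Summable a)
    (hmono : MonotoneOn h (Ioc 0 A)) (hh : IsDoublingOn A C h) {N : ℕ}
    (hNA : nodeLen a (2 ^ N) ≤ A) (hK : ∀ M ≥ N, 2 ^ M * h (nodeLen a (2 ^ M)) ≤ K) :
    packSup h (nodeLen a (2 ^ N)) (cantorSetOf a) ≤ 2 * C * K := by
  refine iSup₂_le fun P ⟨hcount, hball, hdisj⟩ => ?_
  have := hcount.to_subtype
  have hstep : ∀ p : P, ∃ L, ∃ j < 2 ^ L, stepInterval a L j ⊆ ball (p : ℝ × ℝ).1 (p : ℝ × ℝ).2 ∧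
      h (2 * (p : ℝ × ℝ).2) ≤ 2 * C * K * 2⁻¹ ^ L := fun p =>
    have ⟨hx, hr, hrN⟩ := hball p p.2
    exists_stepInterval_subset_ball_gauge_le ha hs hmono hh hNA hK hx hr hrN.le
  choose L j hj hsub hle using hstep
  have hkraft : ∑' p : P, (2⁻¹ : ℝ≥0∞) ^ L p ≤ 1 :=
    tsum_two_inv_pow_le_one_of_disjoint_stepInterval ha hs hj fun p q hpq =>
      (hdisj p.2 q.2 (Subtype.coe_ne_coe.2 hpq)).mono (hsub p) (hsub q)
  calc ∑' p : P, h (2 * (p : ℝ × ℝ).2) ≤ ∑' p : P, 2 * (C : ℝ≥0∞) * K * 2⁻¹ ^ L p :=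
        ENNReal.tsum_le_tsum hle
    _ = 2 * C * K * ∑' p : P, 2⁻¹ ^ L p := ENNReal.tsum_mul_left
    _ ≤ 2 * C * K := mul_le_of_le_one_right' hkraft

lemma P0h_cantorSetOf_ne_top (hA : 0 < A) (hpos : ∀ n, 0 < a n) (ha : Antitone a)
    (hs : Summable a) (hmono : MonotoneOn h (Ioc 0 A)) (hh : IsDoublingOn A C h)
    (hK : ∀ᶠ N in atTop, 2 ^ N * h (nodeLen a (2 ^ N)) ≤ K) : P0h A h (cantorSetOf a) ≠ ∞ := by
  obtain ⟨N, hN⟩ := eventually_atTop.1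
    (hK.and ((tendsto_nodeLen_two_pow ha hs).eventually_le_const hA))
  refine P0h_ne_top_iff.2 ⟨nodeLen a (2 ^ N), nodeLen_pos hpos ha hs Nat.one_le_two_pow,
    (hN N le_rfl).2, ne_top_of_le_ne_top (b := 2 * C * K) (by finiteness) ?_⟩
  exact packSup_cantorSetOf_le ha hs hmono hh (hN N le_rfl).2 fun M hM => (hN M hM).1

theorem Ph_cantorSetOf_eq_top_iff (hA : 0 < A) (hpos : ∀ n, 0 < a n) (ha : Antitone a)
    (hs : Summable a) (hmono : MonotoneOn h (Ioc 0 A)) (hh : IsDoublingOn A C h) :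
    Ph A h (cantorSetOf a) = ∞ ↔ P0h A h (cantorSetOf a) = ∞ := by
  refine ⟨fun htop => top_unique (htop ▸ Ph_le_P0h hA), fun htop => ?_⟩
  by_contra hfin
  have hne : (cantorSetOf a).Nonempty :=
    ⟨_, leftEnd_mem_cantorSetOf ha hs (k := 0) (j := 0) one_pos⟩
  obtain ⟨x, hx, ε, hε, hlocal⟩ :=
    exists_P0h_inter_ball_ne_top hh (isClosed_cantorSetOf a) hne hfin
  obtain ⟨K, hK⟩ := exists_eventually_two_pow_mul_le hpos ha hs hx hε hlocal
  exact P0h_cantorSetOf_ne_top hA hpos ha hs hmono hh hK htop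

end CantorPacking

lemma monotoneOn_ofReal_rpow {s : ℝ} (hs : 0 ≤ s) (A : ℝ) :
    MonotoneOn (fun x : ℝ => ENNReal.ofReal (x ^ s)) (Ioc 0 A) := fun _ hx _ _ hxy =>
  ENNReal.ofReal_le_ofReal (Real.rpow_le_rpow hx.1.le hxy hs)

lemma isDoublingOn_ofReal_rpow (A s : ℝ) :
    IsDoublingOn A (2 ^ s) fun x => ENNReal.ofReal (x ^ s) := by
  intro x hx _
  beta_reduce
  rw [Real.mul_rpow zero_le_two hx.le, ENNReal.ofReal_mul (by positivity),
    ← NNReal.coe_ofNat 2, ← NNReal.coe_rpow, ENNReal.ofReal_coe_nnreal]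

/-- Corollary (ii): the packing and pre-packing dimensions of
the Cantor set `C_a` coincide:
`sup {s > 0 : P^{h_s}(C_a) = ∞} = sup {s > 0 : P₀^{h_s}(C_a) = ∞}`, where
`h_s(x) = x^s` (the latter supremum being the upper box dimension). -/
theorem packDim_eq_prePackDim_cantor (A : ℝ) (hA : 0 < A) (a : ℕ → ℝ)
    (apos : ∀ n, 0 < a n) (amono : ∀ n, a (n + 1) ≤ a n) (asum : Summable a) :
    packDim A (cantorSetOf a) = prePackDim A (cantorSetOf a) := by
  refine iSup_congr fun s => iSup_congr fun hs => ?_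
  rw [Ph_cantorSetOf_eq_top_iff hA apos (antitone_nat_of_succ_le amono) asum
    (monotoneOn_ofReal_rpow hs.le A) (isDoublingOn_ofReal_rpow A s)]
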